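/- Let ε ∈ [−1/2, 1/2] with ε ≠ 0. Then there exists a constant C_ε > 0, depending only on A₂, K₂ and ε, such that for every integer N ≥ 2 (h = 1/N) and all vectors ψ = (ψ₀,…,ψ_{N−1}), φ = (φ₀,…,φ_{N−1}) ∈ ℂ^N, setting ψ_h = Σ_i ψ_i χ_{i+ε} and φ_h = Σ_j φ_j χ_j, one has | ∫₀¹ ∫₀¹ ψ_h(s) V₂(s,t) φ_h(t) dt ds − h² Σ_{i,j=0}^{N−1} ψ_i V₂(t_{i+ε}, t_j) φ_j | ≤ C_ε h^{1/2} ‖ψ_h‖₀ ‖φ_h‖₀. -/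

import Mathlib

noncomputable section

/-- Smooth kernel data, 1-periodic in each variable. -/
def SPK (A : ℝ → ℝ → ℂ) : Prop :=
  ContDiff ℝ (⊤ : ℕ∞) (fun p : ℝ × ℝ => A p.1 p.2) ∧
    (∀ s t, A (s + 1) t = A s t) ∧ (∀ s t, A s (t + 1) = A s t)

/-- Logarithmic kernel `V(s,t) = (i/(2π)) A(s,t) log(sin²(π(s−t))) + K(s,t)`. -/
def logKer (A K : ℝ → ℝ → ℂ) (s t : ℝ) : ℂ :=
  Complex.I / (2 * Real.pi) * A s t * (Real.log (Real.sin (Real.pi * (s - t)) ^ 2) : ℂ) + K s t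

/-- Grid point `s_{j+ε} = (j − 1/2 + ε)h`. -/
def sg (h ε : ℝ) (j : ℤ) : ℝ := ((j : ℝ) - 1 / 2 + ε) * h

/-- Grid point `t_{j+ε} = (j + ε)h`. -/
def tg (h ε : ℝ) (j : ℤ) : ℝ := ((j : ℝ) + ε) * h

/-- Integral operator with kernel `V`. -/
def Vop (V : ℝ → ℝ → ℂ) (φ : ℝ → ℂ) (s : ℝ) : ℂ := ∫ t in (0:ℝ)..1, V s t * φ t

/-- Hypersingular operator `W = −D V₁ D + V₂`. -/
def Wop (V1 V2 : ℝ → ℝ → ℂ) (φ : ℝ → ℂ) (s : ℝ) : ℂ :=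
  -deriv (Vop V1 (deriv φ)) s + Vop V2 φ s

/-- Nyström matrix entries `W^ε_{ij}`. -/
def Wmat (V1 V2 : ℝ → ℝ → ℂ) (h ε : ℝ) (i j : ℤ) : ℂ :=
  V1 (sg h ε (i + 1)) (sg h 0 (j + 1)) - V1 (sg h ε i) (sg h 0 (j + 1))
    - V1 (sg h ε (i + 1)) (sg h 0 j) + V1 (sg h ε i) (sg h 0 j)
    + (h : ℂ) ^ 2 * V2 (tg h ε i) (tg h 0 j)

/-- Fourier coefficient of a 1-periodic function. -/
def fc (u : ℝ → ℂ) (m : ℤ) : ℂ :=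
  ∫ t in (0:ℝ)..1, u t * Complex.exp (-(2 * Real.pi * Complex.I * (m : ℂ) * (t : ℂ)))

/-- Periodic Sobolev norm of order `r`. -/
def sobNorm (r : ℝ) (u : ℝ → ℂ) : ℝ :=
  Real.sqrt (‖fc u 0‖ ^ 2 +
    ∑' m : ℤ, if m = 0 then 0 else |(m : ℝ)| ^ (2 * r) * ‖fc u m‖ ^ 2)

/-- 1-periodic step function on the ε-shifted grid with coefficients `v`. -/
def stepf (N : ℕ) (ε : ℝ) (v : ZMod N → ℂ) (s : ℝ) : ℂ :=
  v ((⌊s * N + 1 / 2 - ε⌋ : ℤ) : ZMod N)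

/-- Midpoint quadrature error matrix entries `E^ε_{ij}`. -/
def Emat (V2 : ℝ → ℝ → ℂ) (h ε : ℝ) (i j : ℤ) : ℂ :=
  (∫ s in (sg h ε i)..(sg h ε (i + 1)), ∫ t in (sg h 0 j)..(sg h 0 (j + 1)), V2 s t)
    - (h : ℂ) ^ 2 * V2 (tg h ε i) (tg h 0 j)

/-- Spectral (ℓ²-operator) norm of a complex `N×N` matrix. -/
def specNorm {N : ℕ} (M : Matrix (Fin N) (Fin N) ℂ) : ℝ :=
  ‖LinearMap.toContinuousLinearMap (Matrix.toEuclideanLin M)‖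

/-- The function `C̄₁(t) = −(1/(2πi)) log(4 sin²(πt))`. -/
def Cbar1 (t : ℝ) : ℂ :=
  -(1 / (2 * Real.pi * Complex.I)) * (Real.log (4 * Real.sin (Real.pi * t) ^ 2) : ℂ)

end

/-!
The double sum is itself a double integral: if `P` and `Q` send a point to the midpoint of its cell
in the `ε`-shifted and in the unshifted grid, it equals `∫∫ ψ_h(s) V(P s, Q t) φ_h(t) dt ds`. By
Cauchy–Schwarz the quadrature error is at most `‖ψ_h‖₀ ‖φ_h‖₀` times the `L²` norm of
`V(s, t) - V(P s, Q t)`, so it suffices to bound the latter by a multiple of `√h`.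

Put `S = |sin π(s - t)|` and `T = |sin π(P s - Q t)|`. Then `|S - T| ≤ π h`, while
`T ≥ 2 dist(ε, ℤ) h`, because `P s - Q t` lies in `(ε + ℤ) h`. Hence `|log S - log T|` is at most a
multiple of `log (1 + h / S)`, whose square has integral `O(h)` by scaling, as `log² (1 + 1 / |x|)`
is integrable on `ℝ`. The variation of the Hölder-`1/2` functions `A` and `K` contributes another
`O(√h)`.
-/

open MeasureTheory Set
open scoped NNReal

/-! ### Logarithms -/

lemma log_one_add_le_rpow_div {y a : ℝ} (hy : 0 ≤ y) (ha : 0 < a) (ha1 : a ≤ 1) :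
    Real.log (1 + y) ≤ y ^ a / a := by
  have hpos : 0 < (1 + y) ^ a := by positivity
  have hsub : (1 + y) ^ a ≤ 1 + y ^ a := by
    simpa using Real.rpow_add_le_add_rpow zero_le_one hy ha.le ha1
  rw [le_div_iff₀ ha, mul_comm, ← Real.log_rpow (by positivity)]
  linarith [Real.log_le_sub_one_of_pos hpos]

lemma log_one_add_mul_le {c y : ℝ} (hc : 1 ≤ c) (hy : 0 ≤ y) :
    Real.log (1 + c * y) ≤ c * Real.log (1 + y) := by
  rw [← Real.log_rpow (by positivity)]
  gcongr
  exact one_add_mul_self_le_rpow_one_add (by linarith) hc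

lemma log_sub_log_le_log_one_add_div {x y d : ℝ} (hx : 0 < x) (hy : 0 < y) (h : y ≤ x + d) :
    Real.log y - Real.log x ≤ Real.log (1 + d / x) := by
  rw [← Real.log_div hy.ne' hx.ne']
  gcongr
  rw [div_le_iff₀ hx]
  field_simp
  linarith

lemma abs_log_sub_log_le {S T a b h : ℝ} (ha : 1 ≤ a) (hb : 0 < b) (hh : 0 < h) (hS : 0 < S)
    (hST : |S - T| ≤ a * h) (hT : b * h ≤ T) :
    |Real.log S - Real.log T| ≤ a * (1 + a / b) * Real.log (1 + h / S) := by
  have hT0 : 0 < T := (mul_pos hb hh).trans_le hT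
  have hc : 1 ≤ 1 + a / b := le_add_of_nonneg_right (by positivity)
  obtain ⟨hS_sub, hT_sub⟩ := abs_sub_le_iff.1 hST
  have hlog : 0 ≤ Real.log (1 + h / S) := Real.log_nonneg (by linarith [div_pos hh hS])
  have hS_le : S ≤ (1 + a / b) * T := by
    have : a * h ≤ a / b * T := by
      calc a * h = a / b * (b * h) := by field_simp
        _ ≤ a / b * T := by gcongr
    linarith
  rw [abs_sub_le_iff]
  constructor
  · have hdiv : h * a / T ≤ a * (1 + a / b) * (h / S) := by
      calc h * a / T ≤ h * a / (S / (1 + a / b)) := by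
            gcongr
            exact (div_le_iff₀' (by positivity)).2 hS_le
        _ = a * (1 + a / b) * (h / S) := by field_simp
    calc Real.log S - Real.log T ≤ Real.log (1 + h * a / T) :=
          log_sub_log_le_log_one_add_div hT0 hS (by linarith)
      _ ≤ Real.log (1 + a * (1 + a / b) * (h / S)) := by gcongr
      _ ≤ a * (1 + a / b) * Real.log (1 + h / S) :=
          log_one_add_mul_le (one_le_mul_of_one_le_of_one_le ha hc) (by positivity)
  · calc Real.log T - Real.log S ≤ Real.log (1 + a * h / S) :=
          log_sub_log_le_log_one_add_div hS hT0 (by linarith)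
      _ = Real.log (1 + a * (h / S)) := by rw [mul_div_assoc]
      _ ≤ a * Real.log (1 + h / S) := log_one_add_mul_le ha (by positivity)
      _ ≤ a * (1 + a / b) * Real.log (1 + h / S) := by
          gcongr
          exact le_mul_of_one_le_right (by linarith) hc

/-! ### The majorant of the logarithmic singularity -/

lemma log_one_add_sq_le_rpow {y a : ℝ} (hy : 0 ≤ y) (ha : 0 < a) (ha1 : a ≤ 1) :
    Real.log (1 + y) ^ 2 ≤ y ^ (a * 2) / a ^ 2 := by
  calc Real.log (1 + y) ^ 2 ≤ (y ^ a / a) ^ 2 := by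
        gcongr
        exacts [Real.log_nonneg (by linarith), log_one_add_le_rpow_div hy ha ha1]
    _ = y ^ (a * 2) / a ^ 2 := by
        rw [div_pow, Real.rpow_mul hy, Real.rpow_two]

lemma integrable_log_one_add_abs_inv_sq :
    Integrable fun x : ℝ => Real.log (1 + |x|⁻¹) ^ 2 := by
  suffices IntegrableOn (fun r : ℝ => Real.log (1 + r⁻¹) ^ 2) (Ioi 0) by
    simpa using (integrable_fun_norm_addHaar (E := ℝ) volume
      (f := fun r => Real.log (1 + r⁻¹) ^ 2)).2 (by simpa using this)
  have hmeas : Measurable fun r : ℝ => Real.log (1 + r⁻¹) ^ 2 := by fun_prop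
  have hbound {a r : ℝ} (ha : 0 < a) (ha1 : a ≤ 1) (hr : 0 < r) :
      ‖Real.log (1 + r⁻¹) ^ 2‖ ≤ r ^ (-(a * 2)) / a ^ 2 := by
    rw [Real.norm_of_nonneg (sq_nonneg _), Real.rpow_neg hr.le,
      ← Real.inv_rpow hr.le]
    exact log_one_add_sq_le_rpow (inv_nonneg.2 hr.le) ha ha1
  rw [← Ioc_union_Ioi_eq_Ioi zero_le_one]
  refine IntegrableOn.union ?_ ?_
  · have hint : IntegrableOn (fun r : ℝ => r ^ (-(1 / 4 * 2) : ℝ) / (1 / 4) ^ 2) (Ioc 0 1) :=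
      ((intervalIntegrable_iff_integrableOn_Ioc_of_le zero_le_one).1
        (intervalIntegral.intervalIntegrable_rpow' (by norm_num))).div_const _
    exact hint.mono' hmeas.aestronglyMeasurable
      ((ae_restrict_mem measurableSet_Ioc).mono fun r hr =>
        hbound (by norm_num) (by norm_num) hr.1)
  · have hint : IntegrableOn (fun r : ℝ => r ^ (-(1 * 2) : ℝ) / 1 ^ 2) (Ioi 1) :=
      (integrableOn_Ioi_rpow_of_lt (by norm_num) one_pos).div_const _
    exact hint.mono' hmeas.aestronglyMeasurable
      ((ae_restrict_mem measurableSet_Ioi).mono fun r hr =>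
        hbound one_pos le_rfl (one_pos.trans hr))

/-- The squared `L²` norm of `x ↦ log (1 + 1 / |x|)`, the logarithmic singularity rescaled to unit
size. -/
noncomputable def logMass : ℝ := ∫ x : ℝ, Real.log (1 + |x|⁻¹) ^ 2

lemma two_mul_abs_le_abs_sin_pi_mul {x : ℝ} (hx : |x| ≤ 1 / 2) :
    2 * |x| ≤ |Real.sin (Real.pi * x)| := by
  have habs : |Real.pi * x| = Real.pi * |x| := by rw [abs_mul, abs_of_pos Real.pi_pos]
  calc 2 * |x| = 2 / Real.pi * |Real.pi * x| := by
        rw [habs]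
        field_simp
    _ ≤ |Real.sin (Real.pi * x)| := by
        apply Real.mul_abs_le_abs_sin
        rw [habs]
        nlinarith [Real.pi_pos]

lemma two_mul_abs_sub_round_le_abs_sin_pi_mul (x : ℝ) :
    2 * |x - round x| ≤ |Real.sin (Real.pi * x)| := by
  have hsin : |Real.sin (Real.pi * (x - round x))| = |Real.sin (Real.pi * x)| := by
    rw [mul_sub, mul_comm _ (round x : ℝ), Real.sin_sub_int_mul_pi, abs_mul, abs_zpow]
    simp
  exact hsin ▸ two_mul_abs_le_abs_sin_pi_mul (abs_sub_round x)

/-- The majorant `log (1 + h / |sin (π x)|)` of the variation of `log |sin (π x)|` when `x` moves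
by a distance comparable to `h`. At integers, where the true value would be `∞`, it is `0`. -/
noncomputable def logMajorant (h x : ℝ) : ℝ := Real.log (1 + h / |Real.sin (Real.pi * x)|)

lemma measurable_logMajorant (h : ℝ) : Measurable (logMajorant h) := by
  unfold logMajorant
  fun_prop

lemma periodic_logMajorant (h : ℝ) : Function.Periodic (logMajorant h) 1 := fun x => by
  simp [logMajorant, mul_add, Real.sin_add_pi]

lemma logMajorant_nonneg {h : ℝ} (hh : 0 ≤ h) (x : ℝ) : 0 ≤ logMajorant h x :=
  Real.log_nonneg (le_add_of_nonneg_right (by positivity))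

lemma logMajorant_le {h x : ℝ} (hh : 0 < h) (hx : |x| ≤ 1 / 2) :
    logMajorant h x ≤ Real.log (1 + |x / h|⁻¹) := by
  rcases eq_or_ne x 0 with rfl | hx0
  · simp [logMajorant]
  · have hpos : 0 < |x| := abs_pos.2 hx0
    have hsin : |x| ≤ |Real.sin (Real.pi * x)| := by
      linarith [two_mul_abs_le_abs_sin_pi_mul hx]
    rw [abs_div, abs_of_pos hh, inv_div, logMajorant]
    gcongr

lemma logMajorant_sq_le {h x : ℝ} (hh : 0 < h) (hx : x ∈ Ioc (-(1 / 2) : ℝ) (1 / 2)) :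
    logMajorant h x ^ 2 ≤ Real.log (1 + |x / h|⁻¹) ^ 2 :=
  pow_le_pow_left₀ (logMajorant_nonneg hh.le x) (logMajorant_le hh (abs_le.2 ⟨hx.1.le, hx.2⟩)) 2

lemma intervalIntegrable_logMajorant_sq {h : ℝ} (hh : 0 < h) (a b : ℝ) :
    IntervalIntegrable (fun x => logMajorant h x ^ 2) volume a b := by
  have hperiod : IntervalIntegrable (fun x => logMajorant h x ^ 2) volume
      (-(1 / 2)) (-(1 / 2) + 1) := by
    rw [intervalIntegrable_iff_integrableOn_Ioc_of_le (by norm_num)]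
    refine (integrable_log_one_add_abs_inv_sq.comp_div hh.ne').integrableOn.mono'
      ((measurable_logMajorant h).pow_const 2).aestronglyMeasurable
      ((ae_restrict_mem measurableSet_Ioc).mono fun x hx => ?_)
    rw [Real.norm_of_nonneg (sq_nonneg _)]
    exact logMajorant_sq_le hh (by norm_num at hx ⊢; exact hx)
  exact (periodic_logMajorant h).comp (· ^ 2) |>.intervalIntegrable one_ne_zero hperiod a b

lemma integral_logMajorant_sq_le {h : ℝ} (hh : 0 < h) (a : ℝ) :
    ∫ x in a..a + 1, logMajorant h x ^ 2 ≤ h * logMass := by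
  have hint := integrable_log_one_add_abs_inv_sq.comp_div hh.ne'
  calc ∫ x in a..a + 1, logMajorant h x ^ 2
      = ∫ x in (-(1 / 2) : ℝ)..-(1 / 2) + 1, logMajorant h x ^ 2 :=
        ((periodic_logMajorant h).comp (· ^ 2)).intervalIntegral_add_eq a _
    _ = ∫ x in Ioc (-(1 / 2) : ℝ) (1 / 2), logMajorant h x ^ 2 := by
        rw [intervalIntegral.integral_of_le (by norm_num)]
        norm_num
    _ ≤ ∫ x in Ioc (-(1 / 2) : ℝ) (1 / 2), Real.log (1 + |x / h|⁻¹) ^ 2 :=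
        setIntegral_mono_on
          (((intervalIntegrable_iff_integrableOn_Ioc_of_le (by norm_num)).1
            (intervalIntegrable_logMajorant_sq hh _ _)))
          hint.integrableOn measurableSet_Ioc fun x => logMajorant_sq_le hh
    _ ≤ ∫ x : ℝ, Real.log (1 + |x / h|⁻¹) ^ 2 :=
        setIntegral_le_integral hint (ae_of_all _ fun x => sq_nonneg _)
    _ = h * logMass := by
        rw [Measure.integral_comp_div (fun x : ℝ => Real.log (1 + |x|⁻¹) ^ 2), abs_of_pos hh,
          smul_eq_mul, logMass]

/-! ### Integrals over the unit square -/

/-- Lebesgue measure on the period `(0, 1]`, over which kernels and step functions are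
integrated. -/
noncomputable abbrev unitMeasure : Measure ℝ := volume.restrict (Ioc 0 1)

instance isProbabilityMeasure_unitMeasure : IsProbabilityMeasure unitMeasure := ⟨by simp⟩

lemma integral_unitMeasure {E : Type*} [NormedAddCommGroup E] [NormedSpace ℝ E] (f : ℝ → E) :
    ∫ x, f x ∂unitMeasure = ∫ x in (0 : ℝ)..1, f x :=
  (intervalIntegral.integral_of_le zero_le_one).symm

lemma quasiMeasurePreserving_sub_unitMeasure :
    Measure.QuasiMeasurePreserving (fun p : ℝ × ℝ => p.1 - p.2)
      (unitMeasure.prod unitMeasure) volume :=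
  (quasiMeasurePreserving_sub volume volume).mono_left <| by
    rw [Measure.prod_restrict]
    exact Measure.absolutelyContinuous_of_le Measure.restrict_le_self

section Convolution

variable {E : Type*} [NormedAddCommGroup E] {f : ℝ → E}

lemma integrable_const_sub_unitMeasure (hf : Function.Periodic f 1)
    (hint : IntervalIntegrable f volume 0 1) (s : ℝ) :
    Integrable (fun t => f (s - t)) unitMeasure := by
  refine (intervalIntegrable_iff_integrableOn_Ioc_of_le zero_le_one).1 ?_
  simpa using (hf.intervalIntegrable₀ one_ne_zero hint s (s - 1)).comp_sub_left s

lemma integral_const_sub_unitMeasure [NormedSpace ℝ E] (hf : Function.Periodic f 1) (s : ℝ) :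
    ∫ t, f (s - t) ∂unitMeasure = ∫ x in (0 : ℝ)..1, f x := by
  rw [integral_unitMeasure, intervalIntegral.integral_comp_sub_left]
  simpa using hf.intervalIntegral_add_eq (s - 1) 0

lemma integrable_prod_sub_unitMeasure (hf : Function.Periodic f 1)
    (hmeas : AEStronglyMeasurable f) (hint : IntervalIntegrable f volume 0 1) :
    Integrable (fun p : ℝ × ℝ => f (p.1 - p.2)) (unitMeasure.prod unitMeasure) := by
  have hnorm (s : ℝ) : ∫ t, ‖f (s - t)‖ ∂unitMeasure = ∫ x in (0 : ℝ)..1, ‖f x‖ :=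
    integral_const_sub_unitMeasure (hf.comp norm) s
  refine (integrable_prod_iff (hmeas.comp_quasiMeasurePreserving
    quasiMeasurePreserving_sub_unitMeasure)).2
    ⟨ae_of_all _ fun s => integrable_const_sub_unitMeasure hf hint s, ?_⟩
  simp only [Function.comp_apply, hnorm]
  exact integrable_const _

lemma integral_prod_sub_unitMeasure [NormedSpace ℝ E] [CompleteSpace E]
    (hf : Function.Periodic f 1) (hmeas : AEStronglyMeasurable f)
    (hint : IntervalIntegrable f volume 0 1) :
    ∫ p, f (p.1 - p.2) ∂unitMeasure.prod unitMeasure = ∫ x in (0 : ℝ)..1, f x := by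
  rw [integral_prod _ (integrable_prod_sub_unitMeasure hf hmeas hint)]
  simp [integral_const_sub_unitMeasure hf]

end Convolution

section LogMajorant

variable {h : ℝ}

lemma integrable_prod_logMajorant_sub_sq (hh : 0 < h) :
    Integrable (fun p : ℝ × ℝ => logMajorant h (p.1 - p.2) ^ 2) (unitMeasure.prod unitMeasure) :=
  integrable_prod_sub_unitMeasure ((periodic_logMajorant h).comp (· ^ 2))
    ((measurable_logMajorant h).pow_const 2).aestronglyMeasurable
    (intervalIntegrable_logMajorant_sq hh 0 1)

lemma integral_prod_logMajorant_sub_sq_le (hh : 0 < h) :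
    ∫ p, logMajorant h (p.1 - p.2) ^ 2 ∂unitMeasure.prod unitMeasure ≤
      h * logMass := by
  rw [integral_prod_sub_unitMeasure (f := fun x => logMajorant h x ^ 2)
    ((periodic_logMajorant h).comp (· ^ 2))
    ((measurable_logMajorant h).pow_const 2).aestronglyMeasurable
    (intervalIntegrable_logMajorant_sq hh 0 1)]
  simpa using integral_logMajorant_sq_le hh 0

end LogMajorant

lemma ae_sin_pi_mul_sub_ne_zero :
    ∀ᵐ p ∂unitMeasure.prod unitMeasure, Real.sin (Real.pi * (p.1 - p.2)) ≠ 0 := by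
  have hzeros : {x : ℝ | Real.sin (Real.pi * x) = 0} = range ((↑) : ℤ → ℝ) := by
    ext x
    simp [Real.sin_eq_zero_iff, mul_comm Real.pi, Real.pi_ne_zero]
  have hae : ∀ᵐ x : ℝ, Real.sin (Real.pi * x) ≠ 0 := by
    rw [ae_iff]
    simpa only [not_not, hzeros] using (countable_range _).measure_zero volume
  exact quasiMeasurePreserving_sub_unitMeasure.ae hae

section HilbertSchmidt

variable {α β 𝕜 : Type*} [MeasurableSpace α] [MeasurableSpace β] [RCLike 𝕜]
  {μ : Measure α} {ν : Measure β}

lemma norm_integral_mul_le_sqrt_mul_sqrt {f g : α → 𝕜} (hf : MemLp f 2 μ) (hg : MemLp g 2 μ) :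
    ‖∫ x, f x * g x ∂μ‖ ≤ √(∫ x, ‖f x‖ ^ 2 ∂μ) * √(∫ x, ‖g x‖ ^ 2 ∂μ) := by
  have hölder := integral_mul_norm_le_Lp_mul_Lq (p := 2) (q := 2) (μ := μ) (f := f) (g := g)
    .two_two (by simpa using hf) (by simpa using hg)
  calc ‖∫ x, f x * g x ∂μ‖ ≤ ∫ x, ‖f x‖ * ‖g x‖ ∂μ := by
        simpa only [norm_mul] using norm_integral_le_integral_norm (μ := μ) fun x => f x * g x
    _ ≤ _ := by simpa only [Real.rpow_two, ← Real.sqrt_eq_rpow] using hölder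

variable {f : α → 𝕜} {g : β → 𝕜}

lemma memLp_two_prod_mul (hf : MemLp f 2 μ) (hg : MemLp g 2 ν) :
    MemLp (fun p : α × β => f p.1 * g p.2) 2 (μ.prod ν) := by
  refine (memLp_two_iff_integrable_sq_norm
    (hf.1.comp_fst.mul hg.1.comp_snd)).2 ?_
  simpa only [Pi.mul_apply, norm_mul, mul_pow] using (hf.integrable_norm_pow two_ne_zero).mul_prod
    (hg.integrable_norm_pow two_ne_zero)

variable {k : α × β → 𝕜}

lemma integrable_mul_kernel_mul (hf : MemLp f 2 μ) (hg : MemLp g 2 ν)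
    (hk : MemLp k 2 (μ.prod ν)) :
    Integrable (fun p => f p.1 * k p * g p.2) (μ.prod ν) :=
  ((memLp_two_prod_mul hf hg).integrable_mul hk).congr
    (ae_of_all _ fun _ => mul_right_comm _ _ _)

lemma norm_integral_mul_kernel_mul_le [SFinite μ] [SFinite ν]
    (hf : MemLp f 2 μ) (hg : MemLp g 2 ν) (hk : MemLp k 2 (μ.prod ν)) :
    ‖∫ p, f p.1 * k p * g p.2 ∂μ.prod ν‖ ≤
      √(∫ p, ‖k p‖ ^ 2 ∂μ.prod ν) * √(∫ x, ‖f x‖ ^ 2 ∂μ) * √(∫ y, ‖g y‖ ^ 2 ∂ν) := by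
  have hnorm : ∫ p : α × β, ‖f p.1 * g p.2‖ ^ 2 ∂μ.prod ν =
      (∫ x, ‖f x‖ ^ 2 ∂μ) * ∫ y, ‖g y‖ ^ 2 ∂ν := by
    simpa only [norm_mul, mul_pow] using
      integral_prod_mul (fun x => ‖f x‖ ^ 2) fun y => ‖g y‖ ^ 2
  calc ‖∫ p, f p.1 * k p * g p.2 ∂μ.prod ν‖ = ‖∫ p, k p * (f p.1 * g p.2) ∂μ.prod ν‖ := by
        congr! 3 with p
        ring
    _ ≤ √(∫ p, ‖k p‖ ^ 2 ∂μ.prod ν) * √(∫ p, ‖f p.1 * g p.2‖ ^ 2 ∂μ.prod ν) :=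
        norm_integral_mul_le_sqrt_mul_sqrt hk (memLp_two_prod_mul hf hg)
    _ = _ := by rw [hnorm, Real.sqrt_mul (by positivity), mul_assoc]

end HilbertSchmidt

/-! ### Step functions on a shifted grid -/

section Grid

variable (N : ℕ) (ε : ℝ)

/-- The index of the cell of the `ε`-shifted grid containing `s`; thus `stepf N ε v` is
`v ∘ gridCell N ε`. -/
noncomputable def gridCell (s : ℝ) : ZMod N := (⌊s * N + 1 / 2 - ε⌋ : ℤ)

/-- The midpoint of the cell of the `ε`-shifted grid containing `s`. -/
noncomputable def gridNode (s : ℝ) : ℝ := tg (1 / N) ε ⌊s * N + 1 / 2 - ε⌋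

lemma measurable_gridCell : Measurable (gridCell N ε) :=
  (measurable_of_countable fun n : ℤ => (n : ZMod N)).comp <|
    Int.measurable_floor.comp (by fun_prop)

lemma measurable_gridNode : Measurable (gridNode N ε) :=
  (measurable_of_countable (tg (1 / N) ε)).comp <| Int.measurable_floor.comp (by fun_prop)

lemma abs_sub_gridNode_le [NeZero N] (s : ℝ) : |s - gridNode N ε s| ≤ 1 / N / 2 := by
  have hN : (0 : ℝ) < N := Nat.cast_pos.2 (NeZero.pos N)
  set k := ⌊s * N + 1 / 2 - ε⌋ with hk
  have hlow : k ≤ s * N + 1 / 2 - ε := Int.floor_le _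
  have hup : s * N + 1 / 2 - ε < k + 1 := Int.lt_floor_add_one _
  have hdist : s - gridNode N ε s = (s * N - (k + ε)) / N := by
    rw [gridNode, tg, ← hk]
    field_simp
  rw [hdist, abs_div, abs_of_pos hN, div_right_comm]
  gcongr
  exact abs_le.2 ⟨by linarith, by linarith⟩

lemma memLp_stepf [NeZero N] {μ : Measure ℝ} [IsFiniteMeasure μ] (p : ENNReal)
    (v : ZMod N → ℂ) : MemLp (stepf N ε v) p μ :=
  MemLp.comp_of_map .of_discrete (measurable_gridCell N ε).aemeasurable

lemma sum_range_natCast_zmod [NeZero N] {M : Type*} [AddCommMonoid M] (g : ZMod N → M) :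
    ∑ k ∈ Finset.range N, g k = ∑ i, g i :=
  Finset.sum_nbij' (fun k => (k : ZMod N)) ZMod.val (by simp)
    (fun i _ => Finset.mem_range.2 i.val_lt)
    (fun k hk => ZMod.val_cast_of_lt (Finset.mem_range.1 hk)) (by simp) (by simp)

lemma ae_floor_eq (k : ℤ) : ∀ᵐ u : ℝ ∂volume.restrict (Ioc (k : ℝ) (k + 1)), ⌊u⌋ = k := by
  rw [← restrict_Ioo_eq_restrict_Ioc]
  exact ae_restrict_of_forall_mem measurableSet_Ioo fun u hu =>
    Int.floor_eq_iff.2 ⟨hu.1.le, hu.2⟩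

variable {E : Type*} [NormedAddCommGroup E] (g : ℤ → E)

lemma intervalIntegrable_comp_floor (k : ℤ) :
    IntervalIntegrable (fun u : ℝ => g ⌊u⌋) volume k (k + 1) := by
  refine (intervalIntegrable_const (c := g k)).congr_ae ?_
  rw [uIoc_of_le (by simp)]
  exact (ae_floor_eq k).mono fun u hu => by simp only [hu]

variable [NormedSpace ℝ E] [CompleteSpace E]

lemma intervalIntegral_comp_floor (k : ℤ) : ∫ u in (k : ℝ)..k + 1, g ⌊u⌋ = g k := by
  have hae : ∀ᵐ u ∂volume.restrict (uIoc (k : ℝ) (k + 1)), g ⌊u⌋ = g k := by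
    rw [uIoc_of_le (by simp)]
    exact (ae_floor_eq k).mono fun u hu => by rw [hu]
  rw [intervalIntegral.integral_congr_ae_restrict hae]
  simp

lemma intervalIntegral_comp_floor_range (n : ℕ) :
    ∫ u in (0 : ℝ)..n, g ⌊u⌋ = ∑ k ∈ Finset.range n, g k := by
  have hcell (k : ℕ) : ∫ u in (k : ℝ)..(k + 1 : ℕ), g ⌊u⌋ = g k := by
    exact_mod_cast intervalIntegral_comp_floor g k
  have hint (k : ℕ) : IntervalIntegrable (fun u : ℝ => g ⌊u⌋) volume k (k + 1 : ℕ) := by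
    exact_mod_cast intervalIntegrable_comp_floor g k
  simpa only [hcell, Nat.cast_zero] using (intervalIntegral.sum_integral_adjacent_intervals
    (a := fun k : ℕ => (k : ℝ)) fun k (_ : k < n) => hint k).symm

lemma integral_comp_gridCell [NeZero N] (g : ZMod N → E) :
    ∫ s, g (gridCell N ε s) ∂unitMeasure = (1 / N : ℝ) • ∑ i, g i := by
  have hper : Function.Periodic (fun u : ℝ => g (⌊u⌋ : ℤ)) N := fun u => by simp
  calc ∫ s, g (gridCell N ε s) ∂unitMeasure
      = ∫ s in (0 : ℝ)..1, (fun u : ℝ => g (⌊u⌋ : ℤ)) (N * s + (1 / 2 - ε)) := by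
        simp only [integral_unitMeasure, gridCell, mul_comm, add_sub_assoc]
    _ = (N : ℝ)⁻¹ • ∫ u in (1 / 2 - ε)..(1 / 2 - ε) + N, g (⌊u⌋ : ℤ) := by
        rw [intervalIntegral.integral_comp_mul_add (fun u : ℝ => g (⌊u⌋ : ℤ)) (NeZero.ne _),
          mul_zero, zero_add, mul_one, add_comm]
    _ = (N : ℝ)⁻¹ • ∫ u in (0 : ℝ)..N, g (⌊u⌋ : ℤ) := by
        rw [hper.intervalIntegral_add_eq _ 0, zero_add]
    _ = (1 / N : ℝ) • ∑ i, g i := by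
        rw [intervalIntegral_comp_floor_range fun k => g k, one_div, ← sum_range_natCast_zmod]
        simp

lemma integral_norm_stepf_sq [NeZero N] (v : ZMod N → ℂ) :
    ∫ s, ‖stepf N ε v s‖ ^ 2 ∂unitMeasure = 1 / N * ∑ i, ‖v i‖ ^ 2 :=
  integral_comp_gridCell N ε fun i => ‖v i‖ ^ 2

end Grid

/-! ### Biperiodic kernels -/

/-- A kernel on `ℝ × ℝ` which is `1`-periodic in each of its two variables. -/
def BiPeriodic {E : Type*} (A : ℝ → ℝ → E) : Prop :=
  (∀ t, Function.Periodic (fun s => A s t) 1) ∧ ∀ s, Function.Periodic (A s) 1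

namespace BiPeriodic

variable {E : Type*} {A : ℝ → ℝ → E}

lemma sub_int (hA : BiPeriodic A) (s t : ℝ) (m n : ℤ) : A (s - m) (t - n) = A s t := by
  rw [show A (s - m) (t - n) = A s (t - n) by simpa using (hA.1 (t - n)).sub_int_mul_eq m,
    show A s (t - n) = A s t by simpa using (hA.2 s).sub_int_mul_eq n]

lemma exists_norm_le [SeminormedAddCommGroup E] (hA : BiPeriodic A)
    (hcont : Continuous fun p : ℝ × ℝ => A p.1 p.2) : ∃ M : ℝ≥0, ∀ s t, ‖A s t‖ ≤ M := by
  obtain ⟨M, hM⟩ := (isCompact_Icc (a := (0 : ℝ × ℝ)) (b := 1)).exists_bound_of_continuousOn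
    hcont.continuousOn
  refine ⟨M.toNNReal, fun s t => ?_⟩
  have hmem : (Int.fract s, Int.fract t) ∈ Icc (0 : ℝ × ℝ) 1 :=
    ⟨⟨Int.fract_nonneg s, Int.fract_nonneg t⟩, ⟨(Int.fract_lt_one s).le, (Int.fract_lt_one t).le⟩⟩
  rw [← hA.sub_int s t ⌊s⌋ ⌊t⌋]
  exact (hM _ hmem).trans (Real.le_coe_toNNReal M)

lemma logKer {A K : ℝ → ℝ → ℂ} (hA : BiPeriodic A) (hK : BiPeriodic K) :
    BiPeriodic (logKer A K) := by
  have hsin (x : ℝ) : Real.sin (Real.pi * (x + 1)) ^ 2 = Real.sin (Real.pi * x) ^ 2 := by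
    rw [mul_add, mul_one, Real.sin_add_pi, neg_sq]
  refine ⟨fun t s => ?_, fun s t => ?_⟩
  · have hAst : A (s + 1) t = A s t := hA.1 t s
    have hKst : K (s + 1) t = K s t := hK.1 t s
    simp only [_root_.logKer, hAst, hKst, add_sub_right_comm, hsin]
  · rw [_root_.logKer, _root_.logKer, hA.2 s t, hK.2 s t, ← hsin (s - (t + 1)),
      sub_add_eq_sub_sub, sub_add_cancel]

lemma apply_gridNode (hA : BiPeriodic A) (N : ℕ) [NeZero N] (ε η s t : ℝ) :
    A (gridNode N ε s) (gridNode N η t) =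
      A (tg (1 / N) ε (gridCell N ε s).val) (tg (1 / N) η (gridCell N η t).val) := by
  have htg (δ : ℝ) (k : ℤ) : tg (1 / N) δ ((k : ZMod N).val) = tg (1 / N) δ k - (k / N : ℤ) := by
    have hdiv : (k : ℝ) = (k % N : ℤ) + N * (k / N : ℤ) := by
      exact_mod_cast (Int.emod_add_mul_ediv k N).symm
    have hN : (N : ℝ) ≠ 0 := NeZero.ne _
    rw [ZMod.val_intCast]
    simp only [tg]
    rw [hdiv]
    field_simp
    ring
  simp only [gridCell, htg, sub_int hA, gridNode]

end BiPeriodic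

namespace SPK

variable {A : ℝ → ℝ → ℂ}

lemma biPeriodic (hA : SPK A) : BiPeriodic A := ⟨fun t s => hA.2.1 s t, hA.2.2⟩

lemma exists_lipschitzWith (hA : SPK A) :
    ∃ C, LipschitzWith C fun p : ℝ × ℝ => A p.1 p.2 := by
  set F := fun p : ℝ × ℝ => A p.1 p.2 with hF
  have hperiodic : BiPeriodic fun s t => fderiv ℝ F (s, t) := by
    constructor
    · intro t s
      have h := fderiv_comp_add_right (𝕜 := ℝ) (f := F) (x := (s, t)) (1, 0)
      simpa [hF, hA.2.1] using h.symm
    · intro s t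
      have h := fderiv_comp_add_right (𝕜 := ℝ) (f := F) (x := (s, t)) (0, 1)
      simpa [hF, hA.2.2] using h.symm
  obtain ⟨C, hC⟩ := hperiodic.exists_norm_le (hA.1.continuous_fderiv (by simp))
  exact ⟨C, lipschitzWith_of_nnnorm_fderiv_le (hA.1.differentiable (by simp))
    fun p => hC p.1 p.2⟩

lemma exists_holderWith (hA : SPK A) {r : ℝ≥0} (hr : r ≤ 1) :
    ∃ C, HolderWith C r fun p : ℝ × ℝ => A p.1 p.2 := by
  obtain ⟨L, hL⟩ := hA.exists_lipschitzWith
  obtain ⟨M, hM⟩ := hA.biPeriodic.exists_norm_le hA.1.continuous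
  have hzero : HolderWith (M + M) 0 fun p : ℝ × ℝ => A p.1 p.2 := fun p q => by
    rw [NNReal.coe_zero, ENNReal.rpow_zero, mul_one, edist_nndist, ENNReal.coe_le_coe,
      ← NNReal.coe_le_coe]
    exact (dist_le_norm_add_norm _ _).trans (add_le_add (hM _ _) (hM _ _))
  exact ⟨_, hzero.of_le_of_le (holderWith_one.2 hL) zero_le hr⟩

end SPK

/-! ### The kernel under displacement of its arguments -/

lemma abs_abs_sin_pi_mul_sub_le (x y : ℝ) :
    |(|Real.sin (Real.pi * x)| - |Real.sin (Real.pi * y)|)| ≤ Real.pi * |x - y| := by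
  calc |(|Real.sin (Real.pi * x)| - |Real.sin (Real.pi * y)|)|
      ≤ |Real.sin (Real.pi * x) - Real.sin (Real.pi * y)| := abs_abs_sub_abs_le _ _
    _ ≤ |Real.pi * x - Real.pi * y| := Real.abs_sin_sub_sin_le _ _
    _ = Real.pi * |x - y| := by rw [← mul_sub, abs_mul, abs_of_pos Real.pi_pos]

lemma abs_log_abs_sin_pi_mul_le {x : ℝ} (hx : Real.sin (Real.pi * x) ≠ 0) :
    |Real.log (|Real.sin (Real.pi * x)|)| ≤ logMajorant 1 x := by
  have hS := abs_pos.2 hx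
  rw [abs_of_nonpos (Real.log_nonpos hS.le (Real.abs_sin_le_one _)), logMajorant]
  simpa using log_sub_log_le_log_one_add_div (d := 1) hS one_pos (by linarith)

lemma logKer_eq (A K : ℝ → ℝ → ℂ) (s t : ℝ) :
    logKer A K s t =
      Complex.I / Real.pi * (A s t * Real.log |Real.sin (Real.pi * (s - t))|) + K s t := by
  rw [logKer, ← sq_abs, Real.log_pow]
  push_cast
  ring

lemma norm_sub_le_mul_sqrt {E : Type*} [SeminormedAddCommGroup E] {A : ℝ → ℝ → E} {C : ℝ≥0}
    (hA : HolderWith C (1 / 2) fun p : ℝ × ℝ => A p.1 p.2) {h s t s' t' : ℝ}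
    (hs : |s - s'| ≤ h) (ht : |t - t'| ≤ h) : ‖A s t - A s' t'‖ ≤ C * √h := by
  have hdist : dist (s, t) (s', t') ≤ h := max_le hs ht
  simpa [dist_eq_norm, Real.sqrt_eq_rpow] using hA.dist_le_of_le hdist

section Displacement

variable {A K : ℝ → ℝ → ℂ} {CA CK M : ℝ≥0}
  (hA : HolderWith CA (1 / 2) fun p : ℝ × ℝ => A p.1 p.2)
  (hK : HolderWith CK (1 / 2) fun p : ℝ × ℝ => K p.1 p.2)

include hA hK

lemma norm_logKer_sub_le (hM : ∀ s t, ‖A s t‖ ≤ M) {b h s t s' t' : ℝ} (hb : 0 < b) (hh : 0 < h)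
    (hs : |s - s'| ≤ h / 2) (ht : |t - t'| ≤ h / 2)
    (hsin : Real.sin (Real.pi * (s - t)) ≠ 0) (hsin' : b * h ≤ |Real.sin (Real.pi * (s' - t'))|) :
    ‖logKer A K s t - logKer A K s' t'‖ ≤
      CA * √h * logMajorant 1 (s - t)
        + M * (Real.pi * (1 + Real.pi / b)) * logMajorant h (s - t) + CK * √h := by
  set L := Real.log |Real.sin (Real.pi * (s - t))| with hL
  set L' := Real.log |Real.sin (Real.pi * (s' - t'))| with hL'
  have hh2 : h / 2 ≤ h := half_le_self hh.le
  have hdisp : |(s - t) - (s' - t')| ≤ h := by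
    rw [sub_sub_sub_comm]
    linarith [abs_sub (s - s') (t - t')]
  have hlog : |L - L'| ≤ Real.pi * (1 + Real.pi / b) * logMajorant h (s - t) :=
    abs_log_sub_log_le (by linarith [Real.pi_gt_three]) hb hh (abs_pos.2 hsin)
      ((abs_abs_sin_pi_mul_sub_le _ _).trans (by gcongr)) hsin'
  have hpi : ‖Complex.I / Real.pi‖ ≤ 1 := by
    rw [norm_div, Complex.norm_I, Complex.norm_of_nonneg Real.pi_pos.le]
    exact (div_le_one Real.pi_pos).2 (by linarith [Real.pi_gt_three])
  have hsplit : logKer A K s t - logKer A K s' t' =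
      Complex.I / Real.pi * ((A s t - A s' t') * (L : ℂ) + A s' t' * ((L - L' : ℝ) : ℂ))
        + (K s t - K s' t') := by
    rw [logKer_eq, logKer_eq, ← hL, ← hL']
    push_cast
    ring
  rw [hsplit]
  refine (norm_add_le_of_le (norm_mul_le_of_le hpi (norm_add_le_of_le
    (norm_mul_le_of_le (norm_sub_le_mul_sqrt hA (hs.trans hh2) (ht.trans hh2))
      ((Complex.norm_real L).trans_le (abs_log_abs_sin_pi_mul_le hsin)))
    (norm_mul_le_of_le (hM s' t') ((Complex.norm_real (L - L')).trans_le hlog))))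
    (norm_sub_le_mul_sqrt hK (hs.trans hh2) (ht.trans hh2))).trans_eq ?_
  ring

end Displacement

lemma two_mul_abs_sub_round_mul_le_abs_sin_gridNode_sub (N : ℕ) [NeZero N] (ε η s t : ℝ) :
    2 * |ε - η - round (ε - η)| * (1 / N) ≤
      |Real.sin (Real.pi * (gridNode N ε s - gridNode N η t))| := by
  set x := gridNode N ε s - gridNode N η t with hx
  set k : ℤ := ⌊s * N + 1 / 2 - ε⌋ - ⌊t * N + 1 / 2 - η⌋ with hk
  have hN : (N : ℝ) ≠ 0 := NeZero.ne _
  have hdist : x - round x = (ε - η - (N * round x - k : ℤ)) * (1 / N) := by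
    rw [hx, hk, gridNode, gridNode, tg, tg]
    push_cast
    field_simp
    ring
  calc 2 * |ε - η - round (ε - η)| * (1 / N)
      ≤ 2 * |ε - η - (N * round x - k : ℤ)| * (1 / N) := by
        gcongr 2 * ?_ * (1 / (N : ℝ))
        exact round_le (ε - η) (N * round x - k)
    _ = 2 * |x - round x| := by
        rw [hdist, abs_mul, abs_of_pos (by simp [NeZero.pos] : (0 : ℝ) < 1 / N), mul_assoc]
    _ ≤ |Real.sin (Real.pi * x)| := two_mul_abs_sub_round_le_abs_sin_pi_mul x

/-! ### The quadrature error -/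

/-- The error made in replacing the arguments of `V` by the midpoints of the cells of the `ε`- and
`η`-shifted grids containing them. -/
noncomputable def gridError (V : ℝ → ℝ → ℂ) (N : ℕ) (ε η : ℝ) (p : ℝ × ℝ) : ℂ :=
  V p.1 p.2 - V (gridNode N ε p.1) (gridNode N η p.2)

lemma measurable_logKer {A K : ℝ → ℝ → ℂ}
    (hA : Measurable fun p : ℝ × ℝ => A p.1 p.2) (hK : Measurable fun p : ℝ × ℝ => K p.1 p.2) :
    Measurable fun p : ℝ × ℝ => logKer A K p.1 p.2 := by
  unfold logKer
  fun_prop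

lemma measurable_gridError {V : ℝ → ℝ → ℂ} (hV : Measurable fun p : ℝ × ℝ => V p.1 p.2)
    (N : ℕ) (ε η : ℝ) :
    Measurable (gridError V N ε η) :=
  hV.sub (hV.comp (((measurable_gridNode N ε).comp measurable_fst).prodMk
    ((measurable_gridNode N η).comp measurable_snd)))

lemma memLp_two_and_integral_norm_sq_le_of_norm_le_add {α E : Type*} [MeasurableSpace α]
    [NormedAddCommGroup E] {μ : Measure α} {F : α → E} {u v w : α → ℝ}
    (hF : AEStronglyMeasurable F μ) (hu : Integrable (fun x => u x ^ 2) μ)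
    (hv : Integrable (fun x => v x ^ 2) μ) (hw : Integrable (fun x => w x ^ 2) μ)
    (hle : ∀ᵐ x ∂μ, ‖F x‖ ≤ u x + v x + w x) :
    MemLp F 2 μ ∧
      ∫ x, ‖F x‖ ^ 2 ∂μ ≤ 3 * (∫ x, u x ^ 2 ∂μ + ∫ x, v x ^ 2 ∂μ + ∫ x, w x ^ 2 ∂μ) := by
  have huv : Integrable (fun x => u x ^ 2 + v x ^ 2) μ := hu.add hv
  have hint : Integrable (fun x => 3 * (u x ^ 2 + v x ^ 2 + w x ^ 2)) μ :=
    (huv.add hw).const_mul 3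
  have hsq : ∀ᵐ x ∂μ, ‖F x‖ ^ 2 ≤ 3 * (u x ^ 2 + v x ^ 2 + w x ^ 2) := by
    filter_upwards [hle] with x hx
    calc ‖F x‖ ^ 2 ≤ (u x + v x + w x) ^ 2 := by gcongr
      _ ≤ 3 * (u x ^ 2 + v x ^ 2 + w x ^ 2) := by
          nlinarith [sq_nonneg (u x - v x), sq_nonneg (u x - w x), sq_nonneg (v x - w x)]
  have hFint : Integrable (fun x => ‖F x‖ ^ 2) μ :=
    hint.mono' (hF.norm.pow 2) (hsq.mono fun x hx => by rwa [Real.norm_of_nonneg (sq_nonneg _)])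
  refine ⟨(memLp_two_iff_integrable_sq_norm hF).2 hFint, (integral_mono_ae hFint hint hsq).trans ?_⟩
  rw [integral_const_mul, integral_add huv hw, integral_add hu hv]

lemma memLp_two_and_integral_norm_sq_le_of_norm_le_logMajorant {E : Type*} [NormedAddCommGroup E]
    {F : ℝ × ℝ → E} {a b c h : ℝ} (hh : 0 < h)
    (hF : AEStronglyMeasurable F (unitMeasure.prod unitMeasure))
    (hle : ∀ᵐ p ∂unitMeasure.prod unitMeasure,
      ‖F p‖ ≤ a * √h * logMajorant 1 (p.1 - p.2) + b * logMajorant h (p.1 - p.2) + c * √h) :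
    MemLp F 2 (unitMeasure.prod unitMeasure) ∧
      ∫ p, ‖F p‖ ^ 2 ∂unitMeasure.prod unitMeasure ≤
        3 * (a ^ 2 * logMass + b ^ 2 * logMass + c ^ 2) * h := by
  have hint (r : ℝ) {l : ℝ} (hl : 0 < l) :
      Integrable (fun p : ℝ × ℝ => (r * logMajorant l (p.1 - p.2)) ^ 2)
        (unitMeasure.prod unitMeasure) := by
    simpa only [mul_pow] using (integrable_prod_logMajorant_sub_sq hl).const_mul (r ^ 2)
  have hbound (r : ℝ) {l : ℝ} (hl : 0 < l) :
      ∫ p, (r * logMajorant l (p.1 - p.2)) ^ 2 ∂unitMeasure.prod unitMeasure ≤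
        r ^ 2 * (l * logMass) := by
    simp only [mul_pow, integral_const_mul]
    gcongr
    exact integral_prod_logMajorant_sub_sq_le hl
  obtain ⟨hmem, hint_le⟩ := memLp_two_and_integral_norm_sq_le_of_norm_le_add hF
    (hint (a * √h) one_pos) (hint b hh) (integrable_const _) hle
  refine ⟨hmem, hint_le.trans ?_⟩
  have hc : ∫ _, (c * √h) ^ 2 ∂unitMeasure.prod unitMeasure = c ^ 2 * h := by
    simp [mul_pow, Real.sq_sqrt hh.le]
  have ha : (a * √h) ^ 2 = a ^ 2 * h := by rw [mul_pow, Real.sq_sqrt hh.le]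
  linear_combination 3 * hbound (a * √h) one_pos + 3 * hbound b hh + 3 * hc + 3 * logMass * ha

section Quadrature

variable {V : ℝ → ℝ → ℂ} (N : ℕ) [NeZero N] (ε η : ℝ)

lemma memLp_comp_gridCell {E : Type*} [NormedAddCommGroup E] (G : ZMod N × ZMod N → E)
    (p : ENNReal) : MemLp (fun x : ℝ × ℝ => G (gridCell N ε x.1, gridCell N η x.2)) p
      (unitMeasure.prod unitMeasure) :=
  MemLp.comp_of_map (f := fun x : ℝ × ℝ => (gridCell N ε x.1, gridCell N η x.2)) .of_discrete
    (((measurable_gridCell N ε).comp measurable_fst).prodMk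
      ((measurable_gridCell N η).comp measurable_snd)).aemeasurable

lemma integral_prod_comp_gridCell {E : Type*} [NormedAddCommGroup E] [NormedSpace ℝ E]
    [CompleteSpace E] (G : ZMod N × ZMod N → E) :
    ∫ p, G (gridCell N ε p.1, gridCell N η p.2) ∂unitMeasure.prod unitMeasure =
      (1 / N : ℝ) ^ 2 • ∑ i, ∑ j, G (i, j) := by
  rw [integral_prod _ ((memLp_comp_gridCell N ε η G 1).integrable le_rfl)]
  have hinner (i : ZMod N) :
      ∫ t, G (i, gridCell N η t) ∂unitMeasure = (1 / N : ℝ) • ∑ j, G (i, j) :=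
    integral_comp_gridCell N η fun j => G (i, j)
  simp only [hinner]
  rw [integral_comp_gridCell N ε fun i => (1 / N : ℝ) • ∑ j, G (i, j), ← Finset.smul_sum, smul_smul,
    sq]

lemma quadrature_error_eq (hV : BiPeriodic V)
    (herr : MemLp (gridError V N ε η) 2 (unitMeasure.prod unitMeasure)) (ψ φ : ZMod N → ℂ) :
    (∫ s in (0 : ℝ)..1, ∫ t in (0 : ℝ)..1, stepf N ε ψ s * V s t * stepf N η φ t)
        - (1 / (N : ℂ)) ^ 2 * ∑ i, ∑ j, ψ i * V (tg (1 / N) ε i.val) (tg (1 / N) η j.val) * φ j =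
      ∫ p, stepf N ε ψ p.1 * gridError V N ε η p * stepf N η φ p.2
        ∂unitMeasure.prod unitMeasure := by
  set G : ZMod N × ZMod N → ℂ := fun q =>
    ψ q.1 * V (tg (1 / N) ε q.1.val) (tg (1 / N) η q.2.val) * φ q.2 with hG
  have hsplit (p : ℝ × ℝ) : stepf N ε ψ p.1 * V p.1 p.2 * stepf N η φ p.2 =
      stepf N ε ψ p.1 * gridError V N ε η p * stepf N η φ p.2
        + G (gridCell N ε p.1, gridCell N η p.2) := by
    simp only [hG, gridError, hV.apply_gridNode]
    simp only [stepf, gridCell]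
    ring
  have hint := integrable_mul_kernel_mul (memLp_stepf N ε 2 ψ) (memLp_stepf N η 2 φ) herr
  have hintG := (memLp_comp_gridCell N ε η G 1).integrable le_rfl
  have hdouble : ∫ s in (0 : ℝ)..1, ∫ t in (0 : ℝ)..1, stepf N ε ψ s * V s t * stepf N η φ t =
      ∫ p, stepf N ε ψ p.1 * V p.1 p.2 * stepf N η φ p.2 ∂unitMeasure.prod unitMeasure := by
    rw [integral_prod _ ((hint.add hintG).congr (ae_of_all _ fun p => (hsplit p).symm))]
    simp only [integral_unitMeasure]
  rw [hdouble, integral_congr_ae (ae_of_all _ hsplit), integral_add hint hintG,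
    integral_prod_comp_gridCell]
  simp [hG]

lemma norm_quadrature_error_le (hV : BiPeriodic V)
    (herr : MemLp (gridError V N ε η) 2 (unitMeasure.prod unitMeasure)) (ψ φ : ZMod N → ℂ) :
    ‖(∫ s in (0 : ℝ)..1, ∫ t in (0 : ℝ)..1, stepf N ε ψ s * V s t * stepf N η φ t)
        - (1 / (N : ℂ)) ^ 2 *
          ∑ i, ∑ j, ψ i * V (tg (1 / N) ε i.val) (tg (1 / N) η j.val) * φ j‖ ≤
      √(∫ p, ‖gridError V N ε η p‖ ^ 2 ∂unitMeasure.prod unitMeasure)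
        * √(1 / N * ∑ i, ‖ψ i‖ ^ 2) * √(1 / N * ∑ j, ‖φ j‖ ^ 2) := by
  rw [quadrature_error_eq N ε η hV herr, ← integral_norm_stepf_sq N ε, ← integral_norm_stepf_sq N η]
  exact norm_integral_mul_kernel_mul_le (memLp_stepf N ε 2 ψ) (memLp_stepf N η 2 φ) herr

end Quadrature

section LogKer

variable {A K : ℝ → ℝ → ℂ} {CA CK M : ℝ≥0} (N : ℕ) [NeZero N] {ε η : ℝ}
  (hA : HolderWith CA (1 / 2) fun p : ℝ × ℝ => A p.1 p.2)
  (hK : HolderWith CK (1 / 2) fun p : ℝ × ℝ => K p.1 p.2)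

include hA hK

lemma memLp_two_and_integral_norm_gridError_logKer_sq_le (hM : ∀ s t, ‖A s t‖ ≤ M)
    (hεη : ε - η ≠ round (ε - η)) :
    MemLp (gridError (logKer A K) N ε η) 2 (unitMeasure.prod unitMeasure) ∧
      ∫ p, ‖gridError (logKer A K) N ε η p‖ ^ 2 ∂unitMeasure.prod unitMeasure ≤
        3 * (CA ^ 2 * logMass
          + (M * (Real.pi * (1 + Real.pi / (2 * |ε - η - round (ε - η)|)))) ^ 2 * logMass
          + CK ^ 2) * (1 / N) := by
  have hh : (0 : ℝ) < 1 / N := by simp [NeZero.pos]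
  refine memLp_two_and_integral_norm_sq_le_of_norm_le_logMajorant hh
    (measurable_gridError (measurable_logKer (hA.continuous (by norm_num)).measurable
      (hK.continuous (by norm_num)).measurable) N ε η).aestronglyMeasurable ?_
  filter_upwards [ae_sin_pi_mul_sub_ne_zero] with p hp
  exact norm_logKer_sub_le hA hK hM (by simpa [sub_eq_zero] using hεη) hh
    (abs_sub_gridNode_le N ε _) (abs_sub_gridNode_le N η _) hp
    (two_mul_abs_sub_round_mul_le_abs_sin_gridNode_sub N ε η _ _)

end LogKer

theorem stmt_6_general {A K : ℝ → ℝ → ℂ} (hA : BiPeriodic A) (hK : BiPeriodic K) {CA CK : ℝ≥0}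
    (hCA : HolderWith CA (1 / 2) fun p : ℝ × ℝ => A p.1 p.2)
    (hCK : HolderWith CK (1 / 2) fun p : ℝ × ℝ => K p.1 p.2)
    {ε : ℝ} (hε : ∀ n : ℤ, ε ≠ n) :
    ∃ C > (0 : ℝ), ∀ (N : ℕ) [NeZero N] (ψ φ : ZMod N → ℂ),
      ‖(∫ s in (0 : ℝ)..1, ∫ t in (0 : ℝ)..1, stepf N ε ψ s * logKer A K s t * stepf N 0 φ t)
          - (1 / (N : ℂ)) ^ 2 *
            ∑ i, ∑ j, ψ i * logKer A K (tg (1 / N) ε i.val) (tg (1 / N) 0 j.val) * φ j‖ ≤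
        C * √(1 / N) * √(1 / N * ∑ i, ‖ψ i‖ ^ 2) * √(1 / N * ∑ j, ‖φ j‖ ^ 2) := by
  obtain ⟨M, hM⟩ := hA.exists_norm_le (hCA.continuous (by norm_num))
  set C := 3 * (CA ^ 2 * logMass
    + (M * (Real.pi * (1 + Real.pi / (2 * |ε - 0 - round (ε - 0)|)))) ^ 2 * logMass + CK ^ 2)
  refine ⟨√C + 1, by positivity, fun N _ ψ φ => ?_⟩
  obtain ⟨hmem, hbound⟩ := memLp_two_and_integral_norm_gridError_logKer_sq_le N hCA hCK hM
    (ε := ε) (η := 0) (by rw [sub_zero]; exact hε _)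
  refine (norm_quadrature_error_le N ε 0 (hA.logKer hK) hmem ψ φ).trans ?_
  gcongr
  calc √(∫ p, ‖gridError (logKer A K) N ε 0 p‖ ^ 2 ∂unitMeasure.prod unitMeasure)
      ≤ √(C * (1 / N)) := Real.sqrt_le_sqrt hbound
    _ = √C * √(1 / N) := Real.sqrt_mul' _ (by positivity)
    _ ≤ (√C + 1) * √(1 / N) := by gcongr; exact le_add_of_nonneg_right zero_le_one

/-- quadrature perturbation bound `≤ C_ε h^{1/2} ‖ψ_h‖₀ ‖φ_h‖₀`. -/
theorem stmt_6
    (A2 K2 : ℝ → ℝ → ℂ) (hA2 : SPK A2) (hK2 : SPK K2)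
    (ε : ℝ) (hε1 : ε ∈ Set.Icc (-(1:ℝ)/2) (1/2)) (hε0 : ε ≠ 0) :
    ∃ C > (0:ℝ), ∀ (N : ℕ) [NeZero N], 2 ≤ N → ∀ ψ φv : ZMod N → ℂ,
      ‖(∫ s in (0:ℝ)..1, ∫ t in (0:ℝ)..1,
            stepf N ε ψ s * logKer A2 K2 s t * stepf N 0 φv t)
          - (1 / (N : ℂ)) ^ 2 * ∑ i : ZMod N, ∑ j : ZMod N,
              ψ i * logKer A2 K2 (tg (1 / (N : ℝ)) ε ((i.val : ℕ) : ℤ))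
                  (tg (1 / (N : ℝ)) 0 ((j.val : ℕ) : ℤ)) * φv j‖ ≤
        C * Real.sqrt (1 / (N : ℝ))
          * Real.sqrt ((1 / (N : ℝ)) * ∑ i : ZMod N, ‖ψ i‖ ^ 2)
          * Real.sqrt ((1 / (N : ℝ)) * ∑ j : ZMod N, ‖φv j‖ ^ 2) := by
  obtain ⟨CA, hCA⟩ := hA2.exists_holderWith (r := 1 / 2) (by norm_num)
  obtain ⟨CK, hCK⟩ := hK2.exists_holderWith (r := 1 / 2) (by norm_num)
  have hε (n : ℤ) : ε ≠ n := by
    intro h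
    have hlow : -1 < n := by exact_mod_cast show (-1 : ℝ) < n by linarith [hε1.1]
    have hup : n < 1 := by exact_mod_cast show (n : ℝ) < 1 by linarith [hε1.2]
    exact hε0 (by rw [h, show n = 0 by lia, Int.cast_zero])
  obtain ⟨C, hC, hbound⟩ := stmt_6_general hA2.biPeriodic hK2.biPeriodic hCA hCK hε
  exact ⟨C, hC, fun N _ _ => hbound N⟩
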